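/- arXiv:1607.01231 — 3 statements merged into one kernel-verified Lean document; each statement's English description precedes it below -/
import Mathlib

section
/- Let B be a symmetric positive definite n×n real matrix and let s ∈ ℝ^n with s ≠ 0. Then the matrix B − (Bs)(Bs)ᵀ/(sᵀBs) is symmetric positive semidefinite and its operator norm satisfies ‖B − (Bs)(Bs)ᵀ/(sᵀBs)‖ ≤ ‖B‖. Consequently, for any ȳ ∈ ℝ^n with sᵀȳ > 0, the BFGS-updated matrix satisfies ‖B + (ȳȳᵀ)/(sᵀȳ) − (Bs)(Bs)ᵀ/(sᵀBs)‖ ≤ ‖B‖ + (ȳᵀȳ)/(sᵀȳ). -/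
open Matrix

/-- The operator (spectral) norm of a real matrix, induced by the Euclidean norm. -/
noncomputable def l2OpNorm {n : ℕ} (A : Matrix (Fin n) (Fin n) ℝ) : ℝ :=
  ‖Matrix.toEuclideanCLM (𝕜 := ℝ) A‖

/-!
For a positive operator `T`, the form `⟪T x, y⟫` is a semi-inner product. Subtracting
`(T s) (T s)ᵀ / ⟪s, T s⟫` from `T` amounts to precomposing `T` with the projection along `s` onto
the `T`-orthogonal complement of `s`, so what remains is still positive. It lies below `T` in the
Loewner order because the subtracted term is positive, and the norm of a positive operator, being
the supremum of its Rayleigh quotients, is monotone in that order. The update adds a rank-one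
operator whose norm is known exactly.
-/

section PositiveOperators

open InnerProductSpace
open scoped ComplexConjugate ComplexOrder InnerProductSpace

variable {𝕜 E : Type*} [RCLike 𝕜] [NormedAddCommGroup E] [InnerProductSpace 𝕜 E]

theorem norm_le_norm_of_nonneg_of_loewner_le {S T : E →L[𝕜] E} (hS : 0 ≤ S) (hST : S ≤ T) :
    ‖S‖ ≤ ‖T‖ := by
  rw [ContinuousLinearMap.nonneg_iff_isPositive] at hS
  rw [ContinuousLinearMap.le_def] at hST
  rw [S.norm_eq_iSup_rayleighQuotient hS.isSymmetric]
  refine ciSup_le fun x ↦ le_trans ?_ (T.rayleighQuotient_le_norm x)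
  have hS_nonneg : 0 ≤ S.reApplyInnerSelf x := hS.re_inner_nonneg_left x
  have hS_le : S.reApplyInnerSelf x ≤ T.reApplyInnerSelf x := by
    simpa [ContinuousLinearMap.reApplyInnerSelf_apply, inner_sub_left]
      using hST.re_inner_nonneg_left x
  exact abs_le_abs_of_nonneg (by positivity) (div_le_div_of_nonneg_right hS_le (sq_nonneg _))

/-- The Wedderburn rank reduction `T - (T s) (T s)ᵀ / ⟪s, T s⟫` of an operator `T` in the direction
`s`: the part of `T` that survives in a BFGS update. It is `T` itself, by `0⁻¹ = 0`, when
`⟪s, T s⟫ = 0`. -/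
noncomputable def rankReduction (T : E →L[𝕜] E) (s : E) : E →L[𝕜] E :=
  T - (⟪s, T s⟫_𝕜)⁻¹ • rankOne 𝕜 (T s) (T s)

theorem rankReduction_apply (T : E →L[𝕜] E) (s x : E) :
    rankReduction T s x = T (x - ((⟪s, T s⟫_𝕜)⁻¹ * ⟪T s, x⟫_𝕜) • s) := by
  simp [rankReduction, mul_smul]

variable {T : E →L[𝕜] E} {s : E}

theorem rankReduction_apply_self (hT : T.IsSymmetric) (hs : ⟪s, T s⟫_𝕜 ≠ 0) :
    rankReduction T s s = 0 := by
  rw [rankReduction_apply, hT.apply_clm s s, inv_mul_cancel₀ hs, one_smul, sub_self, map_zero]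

theorem isSymmetric_rankReduction (hT : T.IsSymmetric) (s : E) :
    (rankReduction T s).IsSymmetric := by
  have hreal : conj (⟪s, T s⟫_𝕜)⁻¹ = (⟪s, T s⟫_𝕜)⁻¹ := by
    rw [map_inv₀, inner_conj_symm, hT.apply_clm s s]
  exact hT.sub ((isSymmetric_rankOne_self (T s)).smul hreal)

theorem rankReduction_le (hT : T.IsPositive) (s : E) : rankReduction T s ≤ T := by
  rw [ContinuousLinearMap.le_def, rankReduction, sub_sub_cancel]
  exact (isPositive_rankOne_self (T s)).smul_of_nonneg (inv_nonneg.2 (hT.inner_nonneg_right s))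

theorem isPositive_rankReduction (hT : T.IsPositive) (hs : ⟪s, T s⟫_𝕜 ≠ 0) :
    (rankReduction T s).IsPositive := by
  have hsymm := isSymmetric_rankReduction hT.isSymmetric s
  refine (ContinuousLinearMap.isPositive_iff _).2 ⟨hsymm, fun x ↦ ?_⟩
  set z := x - ((⟪s, T s⟫_𝕜)⁻¹ * ⟪T s, x⟫_𝕜) • s with hz
  have horth : ⟪rankReduction T s x, s⟫_𝕜 = 0 := by
    rw [hsymm.apply_clm x s, rankReduction_apply_self hT.isSymmetric hs, inner_zero_right]
  calc 0 ≤ ⟪T z, z⟫_𝕜 := hT.inner_nonneg_left z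
    _ = ⟪rankReduction T s x, z⟫_𝕜 := by rw [rankReduction_apply]
    _ = ⟪rankReduction T s x, x⟫_𝕜 := by
      rw [hz, inner_sub_right, inner_smul_right, horth, mul_zero, sub_zero]

theorem norm_rankReduction_le (hT : T.IsPositive) (hs : ⟪s, T s⟫_𝕜 ≠ 0) :
    ‖rankReduction T s‖ ≤ ‖T‖ :=
  norm_le_norm_of_nonneg_of_loewner_le
    ((ContinuousLinearMap.nonneg_iff_isPositive _).2 (isPositive_rankReduction hT hs))
    (rankReduction_le hT s)

/-- The BFGS update `T + y yᵀ / ⟪s, y⟫ - (T s) (T s)ᵀ / ⟪s, T s⟫` of the Hessian approximation `T`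
for the step `s` and the gradient difference `y`, with `v vᵀ` encoded as `rankOne 𝕜 v v`. -/
noncomputable def bfgsUpdate (T : E →L[𝕜] E) (s y : E) : E →L[𝕜] E :=
  rankReduction T s + (⟪s, y⟫_𝕜)⁻¹ • rankOne 𝕜 y y

theorem bfgs_update_norm_bound_general (hT : T.IsPositive) (hs : ⟪s, T s⟫_𝕜 ≠ 0) :
    (rankReduction T s).IsPositive ∧ ‖rankReduction T s‖ ≤ ‖T‖ ∧
      ∀ y : E, ⟪s, y⟫_𝕜 ≠ 0 → ‖bfgsUpdate T s y‖ ≤ ‖T‖ + ‖y‖ ^ 2 / ‖⟪s, y⟫_𝕜‖ := by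
  refine ⟨isPositive_rankReduction hT hs, norm_rankReduction_le hT hs, fun y _ ↦ ?_⟩
  calc ‖bfgsUpdate T s y‖
      ≤ ‖rankReduction T s‖ + ‖(⟪s, y⟫_𝕜)⁻¹ • rankOne 𝕜 y y‖ := norm_add_le _ _
    _ = ‖rankReduction T s‖ + ‖y‖ ^ 2 / ‖⟪s, y⟫_𝕜‖ := by
      rw [norm_smul, norm_inv, norm_rankOne, ← sq, inv_mul_eq_div]
    _ ≤ ‖T‖ + ‖y‖ ^ 2 / ‖⟪s, y⟫_𝕜‖ := by gcongr; exact norm_rankReduction_le hT hs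

end PositiveOperators

section Matrices

open InnerProductSpace WithLp
open scoped ComplexOrder

variable {𝕜 ι : Type*} [RCLike 𝕜] [Fintype ι]

theorem inner_toLp_toLp_eq_star_dotProduct (x y : ι → 𝕜) :
    inner 𝕜 (toLp 2 x) (toLp 2 y) = star x ⬝ᵥ y := by
  rw [EuclideanSpace.inner_toLp_toLp, dotProduct_comm]

variable [DecidableEq ι]

theorem isPositive_toEuclideanCLM_iff {A : Matrix ι ι 𝕜} :
    (toEuclideanCLM (𝕜 := 𝕜) A).IsPositive ↔ A.PosSemidef :=
  isPositive_toEuclideanLin_iff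

theorem toEuclideanCLM_vecMulVec_star (x y : ι → 𝕜) :
    toEuclideanCLM (𝕜 := 𝕜) (vecMulVec x (star y)) = rankOne 𝕜 (toLp 2 x) (toLp 2 y) := by
  ext z i
  simp [vecMulVec_mulVec, EuclideanSpace.inner_eq_star_dotProduct, dotProduct_comm, mul_comm]

theorem rankReduction_toEuclideanCLM (B : Matrix ι ι 𝕜) (s : ι → 𝕜) :
    rankReduction (toEuclideanCLM (𝕜 := 𝕜) B) (toLp 2 s) =
      toEuclideanCLM (𝕜 := 𝕜)
        (B - (star s ⬝ᵥ B *ᵥ s)⁻¹ • vecMulVec (B *ᵥ s) (star (B *ᵥ s))) := by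
  rw [rankReduction, map_sub, map_smul, toEuclideanCLM_vecMulVec_star, toEuclideanCLM_toLp,
    inner_toLp_toLp_eq_star_dotProduct]

theorem bfgsUpdate_toEuclideanCLM (B : Matrix ι ι 𝕜) (s y : ι → 𝕜) :
    bfgsUpdate (toEuclideanCLM (𝕜 := 𝕜) B) (toLp 2 s) (toLp 2 y) =
      toEuclideanCLM (𝕜 := 𝕜)
        (B + (star s ⬝ᵥ y)⁻¹ • vecMulVec y (star y)
          - (star s ⬝ᵥ B *ᵥ s)⁻¹ • vecMulVec (B *ᵥ s) (star (B *ᵥ s))) := by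
  rw [bfgsUpdate, rankReduction_toEuclideanCLM, add_sub_right_comm, map_add, map_smul,
    toEuclideanCLM_vecMulVec_star, inner_toLp_toLp_eq_star_dotProduct]

end Matrices

theorem bfgs_update_norm_bound
    {n : ℕ} (hn : 1 ≤ n)
    (B : Matrix (Fin n) (Fin n) ℝ) (hB : B.PosDef)
    (s : Fin n → ℝ) (hs : s ≠ 0) :
    (B - (s ⬝ᵥ B.mulVec s)⁻¹ • Matrix.vecMulVec (B.mulVec s) (B.mulVec s)).PosSemidef ∧
    l2OpNorm (B - (s ⬝ᵥ B.mulVec s)⁻¹ • Matrix.vecMulVec (B.mulVec s) (B.mulVec s))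
      ≤ l2OpNorm B ∧
    ∀ ybar : Fin n → ℝ, 0 < s ⬝ᵥ ybar →
      l2OpNorm (B + (s ⬝ᵥ ybar)⁻¹ • Matrix.vecMulVec ybar ybar
          - (s ⬝ᵥ B.mulVec s)⁻¹ • Matrix.vecMulVec (B.mulVec s) (B.mulVec s))
        ≤ l2OpNorm B + (ybar ⬝ᵥ ybar) / (s ⬝ᵥ ybar) := by
  obtain ⟨hpos, hle, hupdate⟩ := bfgs_update_norm_bound_general (s := WithLp.toLp 2 s)
    (isPositive_toEuclideanCLM_iff.2 hB.posSemidef)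
    (by simpa [inner_toLp_toLp_eq_star_dotProduct] using (hB.dotProduct_mulVec_pos hs).ne')
  rw [rankReduction_toEuclideanCLM] at hpos hle
  refine ⟨isPositive_toEuclideanCLM_iff.1 hpos, hle, fun ybar hy ↦ ?_⟩
  have hnorm : ‖WithLp.toLp 2 ybar‖ ^ 2 = ybar ⬝ᵥ ybar := by
    rw [← real_inner_self_eq_norm_sq, inner_toLp_toLp_eq_star_dotProduct, star_trivial]
  simpa [l2OpNorm, bfgsUpdate_toEuclideanCLM, inner_toLp_toLp_eq_star_dotProduct, hnorm,
    abs_of_pos hy, hy.ne'] using hupdate (WithLp.toLp 2 ybar)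
end

section
/- Let κ > 0 and δ > 0, let H be a symmetric positive semidefinite n×n real matrix, and let s, ȳ ∈ ℝ^n with s ≠ 0 satisfy sᵀȳ ≥ 0.25·δ·(sᵀs) and (ȳᵀȳ)/(sᵀȳ) ≤ (4/δ)·(κ+δ)². Set ρ = 1/(sᵀȳ) and H⁺ = (I − ρ·sȳᵀ)·H·(I − ρ·ȳsᵀ) + ρ·ssᵀ. Then ‖H⁺‖ ≤ ((4κ+5δ)/δ)²·‖H‖ + 4/δ. -/
open Matrix

/-!
Write `c = sᵀȳ`, `ρ = 1 / c` and `V = I - ρ s ȳᵀ`, so that `H⁺ = V H Vᵀ + ρ s sᵀ`. Since rank-one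
matrices satisfy `‖u vᵀ‖ = ‖u‖ ‖v‖`, submultiplicativity and `‖Vᵀ‖ = ‖V‖` give
`‖H⁺‖ ≤ (1 + ρ ‖s‖ ‖ȳ‖)² ‖H‖ + ρ ‖s‖²`. The two curvature conditions say `‖s‖² ≤ α c` and
`‖ȳ‖² ≤ α L² c` with `α = 4 / δ` and `L = κ + δ`; multiplying them yields `ρ ‖s‖ ‖ȳ‖ ≤ α L`, and
`1 + α L = (4κ + 5δ) / δ`.
-/

open WithLp
open scoped Matrix.Norms.L2Operator

theorem norm_mul_mul_star_le {R : Type*} [NonUnitalNormedRing R] [StarRing R]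
    [NormedStarGroup R] (a b : R) : ‖a * b * star a‖ ≤ ‖a‖ ^ 2 * ‖b‖ :=
  calc ‖a * b * star a‖ ≤ ‖a‖ * ‖b‖ * ‖star a‖ := norm_mul₃_le
    _ = ‖a‖ ^ 2 * ‖b‖ := by rw [norm_star]; ring

section RankOne

variable {𝕜 m n : Type*} [RCLike 𝕜] [Fintype m] [Fintype n] [DecidableEq n]

theorem l2_opNorm_vecMulVec_star (u : m → 𝕜) (v : n → 𝕜) :
    ‖vecMulVec u (star v)‖ = ‖toLp 2 u‖ * ‖toLp 2 v‖ := by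
  rw [← InnerProductSpace.norm_rankOne (𝕜 := 𝕜), l2_opNorm_def,
    ← InnerProductSpace.symm_toEuclideanLin_rankOne (toLp 2 u) (toLp 2 v),
    LinearEquiv.trans_apply, LinearEquiv.apply_symm_apply]
  rfl

theorem l2_opNorm_one_le : ‖(1 : Matrix n n 𝕜)‖ ≤ 1 := by
  rw [← diagonal_one, l2_opNorm_diagonal]
  exact (pi_norm_const_le (1 : 𝕜)).trans_eq norm_one

theorem l2_opNorm_one_sub_smul_vecMulVec_star_le (c : 𝕜) (u v : n → 𝕜) :
    ‖1 - c • vecMulVec u (star v)‖ ≤ 1 + ‖c‖ * (‖toLp 2 u‖ * ‖toLp 2 v‖) :=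
  calc ‖1 - c • vecMulVec u (star v)‖
      ≤ ‖(1 : Matrix n n 𝕜)‖ + ‖c • vecMulVec u (star v)‖ := norm_sub_le _ _
    _ ≤ 1 + ‖c‖ * (‖toLp 2 u‖ * ‖toLp 2 v‖) := by
      rw [norm_smul, l2_opNorm_vecMulVec_star]
      gcongr
      exact l2_opNorm_one_le

end RankOne

section BFGS

variable {ι : Type*} [Fintype ι]

theorem norm_toLp_sq_eq_dotProduct (v : ι → ℝ) : ‖toLp 2 v‖ ^ 2 = v ⬝ᵥ v := by
  rw [EuclideanSpace.real_norm_sq_eq]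
  simp only [dotProduct, sq]

variable [DecidableEq ι]

/-- The BFGS update `(I - ρ s yᵀ) H (I - ρ y sᵀ) + ρ s sᵀ`, `ρ = 1 / sᵀy`, of an inverse Hessian
approximation `H` for the step `s` and the gradient difference `y`. It is meaningful only for
`sᵀy ≠ 0`; otherwise `ρ = 0` and the update returns `H`. -/
noncomputable def bfgsInverseUpdate (H : Matrix ι ι ℝ) (s y : ι → ℝ) : Matrix ι ι ℝ :=
  (1 - (s ⬝ᵥ y)⁻¹ • vecMulVec s y) * H * (1 - (s ⬝ᵥ y)⁻¹ • vecMulVec y s)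
    + (s ⬝ᵥ y)⁻¹ • vecMulVec s s

theorem bfgsInverseUpdate_eq_conj_add (H : Matrix ι ι ℝ) (s y : ι → ℝ) :
    bfgsInverseUpdate H s y =
      (1 - (s ⬝ᵥ y)⁻¹ • vecMulVec s y) * H * star (1 - (s ⬝ᵥ y)⁻¹ • vecMulVec s y)
        + (s ⬝ᵥ y)⁻¹ • vecMulVec s s := by
  simp only [bfgsInverseUpdate, star_sub, star_one, star_smul, star_eq_conjTranspose,
    conjTranspose_vecMulVec, star_trivial]

theorem norm_bfgsInverseUpdate_le (H : Matrix ι ι ℝ) (s y : ι → ℝ) :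
    ‖bfgsInverseUpdate H s y‖ ≤
      (1 + |(s ⬝ᵥ y)⁻¹| * (‖toLp 2 s‖ * ‖toLp 2 y‖)) ^ 2 * ‖H‖
        + |(s ⬝ᵥ y)⁻¹| * ‖toLp 2 s‖ ^ 2 := by
  have norm_factor := l2_opNorm_one_sub_smul_vecMulVec_star_le (s ⬝ᵥ y)⁻¹ s y
  have norm_correction : ‖(s ⬝ᵥ y)⁻¹ • vecMulVec s s‖ = |(s ⬝ᵥ y)⁻¹| * ‖toLp 2 s‖ ^ 2 := by
    simpa only [norm_smul, Real.norm_eq_abs, sq, star_trivial] using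
      congrArg (|(s ⬝ᵥ y)⁻¹| * ·) (l2_opNorm_vecMulVec_star s s)
  rw [star_trivial, Real.norm_eq_abs] at norm_factor
  rw [bfgsInverseUpdate_eq_conj_add]
  refine (norm_add_le _ _).trans (add_le_add ?_ norm_correction.le)
  grw [norm_mul_mul_star_le, norm_factor]

theorem norm_bfgsInverseUpdate_le_of_sq_norm_le (H : Matrix ι ι ℝ) {s y : ι → ℝ} {α L : ℝ}
    (hL : 0 ≤ L) (hsy : 0 < s ⬝ᵥ y)
    (hs : ‖toLp 2 s‖ ^ 2 ≤ α * (s ⬝ᵥ y)) (hy : ‖toLp 2 y‖ ^ 2 ≤ α * L ^ 2 * (s ⬝ᵥ y)) :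
    ‖bfgsInverseUpdate H s y‖ ≤ (1 + α * L) ^ 2 * ‖H‖ + α := by
  have hα : 0 ≤ α := nonneg_of_mul_nonneg_left ((sq_nonneg _).trans hs) hsy
  have norm_mul_norm_le : ‖toLp 2 s‖ * ‖toLp 2 y‖ ≤ (s ⬝ᵥ y) * (α * L) := by
    refine (sq_le_sq₀ (by positivity) (by positivity)).1 ?_
    calc (‖toLp 2 s‖ * ‖toLp 2 y‖) ^ 2 = ‖toLp 2 s‖ ^ 2 * ‖toLp 2 y‖ ^ 2 := mul_pow _ _ _
      _ ≤ (α * (s ⬝ᵥ y)) * (α * L ^ 2 * (s ⬝ᵥ y)) := by gcongr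
      _ = ((s ⬝ᵥ y) * (α * L)) ^ 2 := by ring
  have factor_le : (s ⬝ᵥ y)⁻¹ * (‖toLp 2 s‖ * ‖toLp 2 y‖) ≤ α * L :=
    (inv_mul_le_iff₀ hsy).2 norm_mul_norm_le
  have correction_le : (s ⬝ᵥ y)⁻¹ * ‖toLp 2 s‖ ^ 2 ≤ α :=
    (inv_mul_le_iff₀ hsy).2 (hs.trans_eq (mul_comm _ _))
  have update_le := norm_bfgsInverseUpdate_le H s y
  rw [abs_of_pos (inv_pos.2 hsy)] at update_le
  grw [update_le, factor_le, correction_le]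

theorem damped_lbfgs_H_onestep_norm_bound_general {κ δ : ℝ} (hκδ : 0 ≤ κ + δ) (hδ : 0 < δ)
    (H : Matrix ι ι ℝ) {s y : ι → ℝ} (hs : s ≠ 0)
    (hsy : 0.25 * δ * (s ⬝ᵥ s) ≤ s ⬝ᵥ y)
    (hyy : (y ⬝ᵥ y) / (s ⬝ᵥ y) ≤ (4 / δ) * (κ + δ) ^ 2) :
    ‖bfgsInverseUpdate H s y‖ ≤ ((4 * κ + 5 * δ) / δ) ^ 2 * ‖H‖ + 4 / δ := by
  have s_dot_s_pos : 0 < s ⬝ᵥ s := dotProduct_star_self_pos_iff.2 hs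
  have s_dot_y_pos : 0 < s ⬝ᵥ y := lt_of_lt_of_le (by positivity) hsy
  have norm_s_sq_le : ‖toLp 2 s‖ ^ 2 ≤ 4 / δ * (s ⬝ᵥ y) := by
    rw [norm_toLp_sq_eq_dotProduct, div_mul_eq_mul_div, le_div_iff₀ hδ]
    linarith
  have norm_y_sq_le : ‖toLp 2 y‖ ^ 2 ≤ 4 / δ * (κ + δ) ^ 2 * (s ⬝ᵥ y) := by
    rwa [norm_toLp_sq_eq_dotProduct, ← div_le_iff₀ s_dot_y_pos]
  have factor_eq : 1 + 4 / δ * (κ + δ) = (4 * κ + 5 * δ) / δ := by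
    field_simp
    ring
  rw [← factor_eq]
  exact norm_bfgsInverseUpdate_le_of_sq_norm_le H hκδ s_dot_y_pos norm_s_sq_le norm_y_sq_le

end BFGS

theorem damped_lbfgs_H_onestep_norm_bound
    {n : ℕ} (hn : 1 ≤ n)
    (κ δ : ℝ) (hκ : 0 < κ) (hδ : 0 < δ)
    (H : Matrix (Fin n) (Fin n) ℝ) (hH : H.PosSemidef)
    (s ybar : Fin n → ℝ) (hs : s ≠ 0)
    (h1 : 0.25 * δ * (s ⬝ᵥ s) ≤ s ⬝ᵥ ybar)
    (h2 : (ybar ⬝ᵥ ybar) / (s ⬝ᵥ ybar) ≤ (4 / δ) * (κ + δ) ^ 2) :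
    l2OpNorm ((1 - (s ⬝ᵥ ybar)⁻¹ • Matrix.vecMulVec s ybar) * H *
        (1 - (s ⬝ᵥ ybar)⁻¹ • Matrix.vecMulVec ybar s)
      + (s ⬝ᵥ ybar)⁻¹ • Matrix.vecMulVec s s)
      ≤ ((4 * κ + 5 * δ) / δ) ^ 2 * l2OpNorm H + 4 / δ :=
  damped_lbfgs_H_onestep_norm_bound_general (add_pos hκ hδ).le hδ H hs h1 h2
end

section
/- Let κ > 0, δ > 0, and let p ≥ 1 be an integer. For i = 1,…,p, let s_i ∈ ℝ^n with s_i ≠ 0, y_i ∈ ℝ^n with ‖y_i‖ ≤ κ‖s_i‖, and γ_i ∈ [δ, κ+δ]; define θ_i = 0.75·γ_i·(s_iᵀs_i)/(γ_i·s_iᵀs_i − s_iᵀy_i) if s_iᵀy_i < 0.25·γ_i·s_iᵀs_i and θ_i = 1 otherwise, and ȳ_i = θ_i·y_i + (1−θ_i)·γ_i·s_i. Let γ₀ ∈ [δ, κ+δ], set H₀ = γ₀^{−1}·I, and for i = 1,…,p set ρ_i = 1/(s_iᵀȳ_i) and H_i = (I − ρ_i·s_iȳ_iᵀ)·H_{i−1}·(I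 − ρ_i·ȳ_is_iᵀ) + ρ_i·s_is_iᵀ. Then, with α = (4κ+5δ)/δ, the largest eigenvalue of H_p satisfies λ_max(H_p) = ‖H_p‖ ≤ ((α^{2p} − 1)/(α² − 1))·(4/δ) + α^{2p}/δ. -/
open Matrix

/-!
Powell's damping replaces `y` by a convex combination `ȳ` of `y` and `γ s`. Convexity of the ball
gives `‖ȳ‖ ≤ M ‖s‖`, and the weight is chosen so that `⟪s, ȳ⟫ ≥ c γ ‖s‖²`. Hence with
`ρ = ⟪s, ȳ⟫⁻¹` and `m = c δ` the rank-one operators in the BFGS update satisfy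
`ρ ‖s‖ ‖ȳ‖ ≤ M / m` and `ρ ‖s‖² ≤ 1 / m`, so that one update gives
`‖H⁺‖ ≤ (1 + M / m)² ‖H‖ + 1 / m`; iterating this affine recurrence produces the geometric sum.
For `c = 1/4` and `M = κ + δ` the ratio `1 + M / m` is `(4κ + 5δ) / δ`.
-/

open Finset InnerProductSpace
open scoped RealInnerProductSpace

section AffineRecurrence

variable {R : Type*} [CommSemiring R] [PartialOrder R] [IsOrderedRing R]

lemma le_geom_sum_mul_add_of_le_mul_add {a b : R} {u : ℕ → R} {p : ℕ} (ha : 0 ≤ a)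
    (hu : ∀ i < p, u (i + 1) ≤ a * u i + b) :
    u p ≤ (∑ i ∈ range p, a ^ i) * b + a ^ p * u 0 := by
  induction p with
  | zero => simp
  | succ p ih =>
    calc u (p + 1) ≤ a * u p + b := hu p p.lt_succ_self
      _ ≤ a * ((∑ i ∈ range p, a ^ i) * b + a ^ p * u 0) + b := by
        gcongr
        exact ih fun i hi => hu i (hi.trans p.lt_succ_self)
      _ = (∑ i ∈ range (p + 1), a ^ i) * b + a ^ (p + 1) * u 0 := by
        rw [geom_sum_succ]
        ring

end AffineRecurrence

section PowellWeight

/-- Powell's damping weight: the largest `θ ≤ 1` for which the damped curvature `θ b + (1 - θ) a`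
is at least `c a`, where `b` is the measured curvature `sᵀy`, `a ≥ 0` the curvature `sᵀBs` of the
Hessian model `B`, and `c ≤ 1`. -/
noncomputable def powellWeight (c a b : ℝ) : ℝ :=
  if b < c * a then (1 - c) * a / (a - b) else 1

variable {c a : ℝ}

lemma powellWeight_mem_Icc (hc : c ≤ 1) (ha : 0 ≤ a) (b : ℝ) :
    powellWeight c a b ∈ Set.Icc 0 1 := by
  unfold powellWeight
  split_ifs with hb
  · have hgap : 0 < a - b := sub_pos.2 (hb.trans_le (mul_le_of_le_one_left ha hc))
    refine ⟨div_nonneg (mul_nonneg (sub_nonneg.2 hc) ha) hgap.le, (div_le_one hgap).2 ?_⟩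
    linarith
  · simp

lemma mul_le_powellWeight_mul_add (hc : c ≤ 1) (ha : 0 ≤ a) (b : ℝ) :
    c * a ≤ powellWeight c a b * b + (1 - powellWeight c a b) * a := by
  unfold powellWeight
  split_ifs with hb
  · have hgap : a - b ≠ 0 := (sub_pos.2 (hb.trans_le (mul_le_of_le_one_left ha hc))).ne'
    have hweight : (1 - c) * a / (a - b) * (a - b) = (1 - c) * a := div_mul_cancel₀ _ hgap
    linarith
  · linarith

end PowellWeight

section OperatorNorm

lemma norm_le_opNorm_of_mem_spectrum {𝕜 F : Type*} [NontriviallyNormedField 𝕜]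
    [NormedAddCommGroup F] [NormedSpace 𝕜 F] [CompleteSpace F] {T : F →L[𝕜] F} {t : 𝕜}
    (ht : t ∈ spectrum 𝕜 T) : ‖t‖ ≤ ‖T‖ :=
  (spectrum.norm_le_norm_mul_of_mem ht).trans
    (mul_le_of_le_one_right (norm_nonneg T) ContinuousLinearMap.norm_id_le)

lemma norm_one_sub_smul_rankOne_le {𝕜 F : Type*} [RCLike 𝕜] [NormedAddCommGroup F]
    [InnerProductSpace 𝕜 F] (r : 𝕜) (u v : F) :
    ‖1 - r • rankOne 𝕜 u v‖ ≤ 1 + ‖r‖ * (‖u‖ * ‖v‖) :=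
  calc ‖1 - r • rankOne 𝕜 u v‖ ≤ ‖(1 : F →L[𝕜] F)‖ + ‖r • rankOne 𝕜 u v‖ := norm_sub_le _ _
    _ ≤ 1 + ‖r‖ * (‖u‖ * ‖v‖) := by
      rw [norm_smul, norm_rankOne]
      gcongr
      exact ContinuousLinearMap.norm_id_le

end OperatorNorm

section RealInnerProductSpace

variable {E : Type*} [NormedAddCommGroup E] [InnerProductSpace ℝ E]

section PowellDamping

/-- Powell's damping of the gradient difference `y` along the step `s`, relative to the
Hessian model `γ • 1` and with curvature threshold `c`. -/
noncomputable def powellDamping (c γ : ℝ) (s y : E) : E :=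
  powellWeight c (γ * ‖s‖ ^ 2) ⟪s, y⟫ • y +
    (1 - powellWeight c (γ * ‖s‖ ^ 2) ⟪s, y⟫) • γ • s

variable {c γ : ℝ}

lemma le_inner_powellDamping (hc : c ≤ 1) (hγ : 0 ≤ γ) (s y : E) :
    c * (γ * ‖s‖ ^ 2) ≤ ⟪s, powellDamping c γ s y⟫ := by
  simpa only [powellDamping, inner_add_right, real_inner_smul_right, real_inner_self_eq_norm_sq]
    using mul_le_powellWeight_mul_add hc (by positivity : 0 ≤ γ * ‖s‖ ^ 2) ⟪s, y⟫

lemma norm_powellDamping_le {M : ℝ} {s y : E} (hc : c ≤ 1) (hγ : γ ∈ Set.Icc 0 M)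
    (hy : ‖y‖ ≤ M * ‖s‖) : ‖powellDamping c γ s y‖ ≤ M * ‖s‖ := by
  have hmodel : ‖γ • s‖ ≤ M * ‖s‖ := by
    rw [norm_smul, Real.norm_of_nonneg hγ.1]
    gcongr
    exact hγ.2
  obtain ⟨hweight₀, hweight₁⟩ :=
    powellWeight_mem_Icc hc (mul_nonneg hγ.1 (sq_nonneg ‖s‖)) ⟪s, y⟫
  simpa only [mem_closedBall_zero_iff, powellDamping] using
    (convex_closedBall (0 : E) (M * ‖s‖)) (mem_closedBall_zero_iff.2 hy)
      (mem_closedBall_zero_iff.2 hmodel) hweight₀ (sub_nonneg.2 hweight₁) (add_sub_cancel _ _)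

end PowellDamping

section InverseBFGSUpdate

/-- The BFGS update of an inverse-Hessian approximation `H` with step `s` and gradient difference
`y`, on a real inner product space. The outer products `u vᵀ` become rank-one operators. The update
is meaningful only if `⟪s, y⟫ ≠ 0`. -/
noncomputable def inverseBFGSUpdate (s y : E) (H : E →L[ℝ] E) : E →L[ℝ] E :=
  (1 - ⟪s, y⟫⁻¹ • rankOne ℝ s y) * H * (1 - ⟪s, y⟫⁻¹ • rankOne ℝ y s) +
    ⟪s, y⟫⁻¹ • rankOne ℝ s s

variable {m M : ℝ} {s y : E}

lemma norm_inv_inner_mul_norm_sq_le (hm : 0 < m) (hs : s ≠ 0) (hsy : m * ‖s‖ ^ 2 ≤ ⟪s, y⟫) :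
    ‖⟪s, y⟫⁻¹‖ * ‖s‖ ^ 2 ≤ m⁻¹ := by
  have hcurv : 0 < ⟪s, y⟫ := (by positivity : 0 < m * ‖s‖ ^ 2).trans_le hsy
  rw [Real.norm_of_nonneg (inv_nonneg.2 hcurv.le), inv_mul_le_iff₀ hcurv, ← div_eq_mul_inv,
    le_div_iff₀ hm]
  linarith

lemma norm_inv_inner_mul_norm_mul_norm_le (hm : 0 < m) (hs : s ≠ 0)
    (hsy : m * ‖s‖ ^ 2 ≤ ⟪s, y⟫) (hy : ‖y‖ ≤ M * ‖s‖) :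
    ‖⟪s, y⟫⁻¹‖ * (‖s‖ * ‖y‖) ≤ M / m := by
  have hM : 0 ≤ M := nonneg_of_mul_nonneg_left ((norm_nonneg y).trans hy) (norm_pos_iff.2 hs)
  calc ‖⟪s, y⟫⁻¹‖ * (‖s‖ * ‖y‖) ≤ ‖⟪s, y⟫⁻¹‖ * (‖s‖ * (M * ‖s‖)) := by gcongr
    _ = M * (‖⟪s, y⟫⁻¹‖ * ‖s‖ ^ 2) := by ring
    _ ≤ M * m⁻¹ := by
      gcongr
      exact norm_inv_inner_mul_norm_sq_le hm hs hsy
    _ = M / m := (div_eq_mul_inv M m).symm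

lemma norm_inverseBFGSUpdate_le (hm : 0 < m) (hs : s ≠ 0) (hsy : m * ‖s‖ ^ 2 ≤ ⟪s, y⟫)
    (hy : ‖y‖ ≤ M * ‖s‖) (H : E →L[ℝ] E) :
    ‖inverseBFGSUpdate s y H‖ ≤ (1 + M / m) ^ 2 * ‖H‖ + m⁻¹ := by
  have hratio := norm_inv_inner_mul_norm_mul_norm_le hm hs hsy hy
  have hleft : ‖1 - ⟪s, y⟫⁻¹ • rankOne ℝ s y‖ ≤ 1 + M / m :=
    (norm_one_sub_smul_rankOne_le _ s y).trans (by gcongr)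
  have hright : ‖1 - ⟪s, y⟫⁻¹ • rankOne ℝ y s‖ ≤ 1 + M / m :=
    (norm_one_sub_smul_rankOne_le _ y s).trans (by rw [mul_comm ‖y‖]; gcongr)
  have hcorrection : ‖⟪s, y⟫⁻¹ • rankOne ℝ s s‖ ≤ m⁻¹ := by
    rw [norm_smul, norm_rankOne, ← sq]
    exact norm_inv_inner_mul_norm_sq_le hm hs hsy
  calc ‖inverseBFGSUpdate s y H‖
      ≤ ‖1 - ⟪s, y⟫⁻¹ • rankOne ℝ s y‖ * ‖H‖ * ‖1 - ⟪s, y⟫⁻¹ • rankOne ℝ y s‖ +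
          ‖⟪s, y⟫⁻¹ • rankOne ℝ s s‖ := norm_add_le_of_le norm_mul₃_le le_rfl
    _ ≤ (1 + M / m) * ‖H‖ * (1 + M / m) + m⁻¹ := by
      have := (norm_nonneg _).trans hleft
      gcongr
    _ = (1 + M / m) ^ 2 * ‖H‖ + m⁻¹ := by ring

end InverseBFGSUpdate

section DampedBFGS

variable {c δ M : ℝ}

lemma norm_inverseBFGSUpdate_powellDamping_le {γ : ℝ} {s y : E} (hc : c ∈ Set.Ioc 0 1)
    (hδ : 0 < δ) (hs : s ≠ 0) (hy : ‖y‖ ≤ M * ‖s‖) (hγ : γ ∈ Set.Icc δ M) (H : E →L[ℝ] E) :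
    ‖inverseBFGSUpdate s (powellDamping c γ s y) H‖ ≤
      (1 + M / (c * δ)) ^ 2 * ‖H‖ + (c * δ)⁻¹ := by
  have hγ₀ : 0 ≤ γ := hδ.le.trans hγ.1
  have hcurv : c * δ * ‖s‖ ^ 2 ≤ ⟪s, powellDamping c γ s y⟫ :=
    calc c * δ * ‖s‖ ^ 2 = c * (δ * ‖s‖ ^ 2) := mul_assoc _ _ _
      _ ≤ c * (γ * ‖s‖ ^ 2) :=
        mul_le_mul_of_nonneg_left (mul_le_mul_of_nonneg_right hγ.1 (sq_nonneg _)) hc.1.le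
      _ ≤ ⟪s, powellDamping c γ s y⟫ := le_inner_powellDamping hc.2 hγ₀ s y
  exact norm_inverseBFGSUpdate_le (mul_pos hc.1 hδ) hs hcurv
    (norm_powellDamping_le hc.2 ⟨hγ₀, hγ.2⟩ hy) H

theorem sdlbfgs_H_max_eigenvalue_bound_general [CompleteSpace E] {α B : ℝ} {p : ℕ}
    {s y : ℕ → E} {γ : ℕ → ℝ} {H : ℕ → E →L[ℝ] E}
    (hc : c ∈ Set.Ioc 0 1) (hδ : 0 < δ) (hM : 0 < M) (hα : α = 1 + M / (c * δ))
    (hs : ∀ i < p, s i ≠ 0) (hy : ∀ i < p, ‖y i‖ ≤ M * ‖s i‖)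
    (hγ : ∀ i < p, γ i ∈ Set.Icc δ M) (hH₀ : ‖H 0‖ ≤ B)
    (hH : ∀ i < p,
      H (i + 1) = inverseBFGSUpdate (s i) (powellDamping c (γ i) (s i) (y i)) (H i)) :
    ‖H p‖ ≤ (α ^ (2 * p) - 1) / (α ^ 2 - 1) * (c * δ)⁻¹ + α ^ (2 * p) * B ∧
    ∀ t ∈ spectrum ℝ (H p),
      |t| ≤ (α ^ (2 * p) - 1) / (α ^ 2 - 1) * (c * δ)⁻¹ + α ^ (2 * p) * B := by
  have hα₁ : 1 < α := hα ▸ lt_add_of_pos_right 1 (div_pos hM (mul_pos hc.1 hδ))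
  have hstep : ∀ i < p, ‖H (i + 1)‖ ≤ α ^ 2 * ‖H i‖ + (c * δ)⁻¹ := fun i hi => by
    rw [hH i hi, hα]
    exact norm_inverseBFGSUpdate_powellDamping_le hc hδ (hs i hi) (hy i hi) (hγ i hi) (H i)
  suffices hnorm : ‖H p‖ ≤ (α ^ (2 * p) - 1) / (α ^ 2 - 1) * (c * δ)⁻¹ + α ^ (2 * p) * B from
    ⟨hnorm, fun t ht => (norm_le_opNorm_of_mem_spectrum ht).trans hnorm⟩
  calc ‖H p‖
      ≤ (∑ i ∈ range p, (α ^ 2) ^ i) * (c * δ)⁻¹ + (α ^ 2) ^ p * ‖H 0‖ :=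
        le_geom_sum_mul_add_of_le_mul_add (u := fun i => ‖H i‖) (sq_nonneg α) hstep
    _ = (α ^ (2 * p) - 1) / (α ^ 2 - 1) * (c * δ)⁻¹ + α ^ (2 * p) * ‖H 0‖ := by
      rw [geom_sum_eq (one_lt_pow₀ hα₁ two_ne_zero).ne', pow_mul]
    _ ≤ (α ^ (2 * p) - 1) / (α ^ 2 - 1) * (c * δ)⁻¹ + α ^ (2 * p) * B := by gcongr

end DampedBFGS

end RealInnerProductSpace

section Euclidean

variable {ι : Type*} [Fintype ι]

lemma norm_toLp_two_eq_sqrt_dotProduct (u : ι → ℝ) : ‖WithLp.toLp 2 u‖ = √(u ⬝ᵥ u) := by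
  rw [norm_eq_sqrt_real_inner, EuclideanSpace.inner_toLp_toLp, star_trivial]

lemma real_inner_toLp_toLp (u v : ι → ℝ) : ⟪WithLp.toLp 2 u, WithLp.toLp 2 v⟫ = u ⬝ᵥ v := by
  rw [EuclideanSpace.inner_toLp_toLp, star_trivial, dotProduct_comm]

variable [DecidableEq ι]

lemma toEuclideanCLM_vecMulVec (u v : ι → ℝ) :
    toEuclideanCLM (𝕜 := ℝ) (vecMulVec u v) = rankOne ℝ (WithLp.toLp 2 u) (WithLp.toLp 2 v) := by
  ext x i
  simp [vecMulVec_mulVec, EuclideanSpace.inner_eq_star_dotProduct, dotProduct_comm, mul_comm]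

lemma toEuclideanCLM_dampedBFGS {c γ θ ρ : ℝ} {s y ybar : ι → ℝ}
    (hθ : θ = if s ⬝ᵥ y < c * γ * (s ⬝ᵥ s)
      then (1 - c) * γ * (s ⬝ᵥ s) / (γ * (s ⬝ᵥ s) - s ⬝ᵥ y) else 1)
    (hybar : ybar = θ • y + (1 - θ) • γ • s) (hρ : ρ = (s ⬝ᵥ ybar)⁻¹) (A : Matrix ι ι ℝ) :
    toEuclideanCLM (𝕜 := ℝ) ((1 - ρ • vecMulVec s ybar) * A * (1 - ρ • vecMulVec ybar s) +
      ρ • vecMulVec s s) =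
      inverseBFGSUpdate (WithLp.toLp 2 s)
        (powellDamping c γ (WithLp.toLp 2 s) (WithLp.toLp 2 y)) (toEuclideanCLM (𝕜 := ℝ) A) := by
  have hweight : θ = powellWeight c (γ * ‖WithLp.toLp 2 s‖ ^ 2)
      ⟪WithLp.toLp 2 s, WithLp.toLp 2 y⟫ := by
    rw [hθ, ← real_inner_self_eq_norm_sq, real_inner_toLp_toLp, real_inner_toLp_toLp, powellWeight,
      mul_assoc c, mul_assoc (1 - c)]
  have hdamped : powellDamping c γ (WithLp.toLp 2 s) (WithLp.toLp 2 y) = WithLp.toLp 2 ybar := by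
    rw [powellDamping, ← hweight, hybar, WithLp.toLp_add, WithLp.toLp_smul, WithLp.toLp_smul,
      WithLp.toLp_smul]
  simp only [hdamped, inverseBFGSUpdate, real_inner_toLp_toLp, ← hρ, map_add, map_mul, map_sub,
    map_one, map_smul, toEuclideanCLM_vecMulVec]

lemma norm_toEuclideanCLM_inv_smul_one_le {δ γ : ℝ} (hδ : 0 < δ) (hγ : δ ≤ γ) :
    ‖toEuclideanCLM (𝕜 := ℝ) (γ⁻¹ • (1 : Matrix ι ι ℝ))‖ ≤ δ⁻¹ := by
  rw [map_smul, map_one, norm_smul, Real.norm_of_nonneg (inv_nonneg.2 (hδ.le.trans hγ))]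
  exact (mul_le_of_le_one_right (inv_nonneg.2 (hδ.le.trans hγ))
    ContinuousLinearMap.norm_id_le).trans (inv_anti₀ hδ hγ)

end Euclidean

theorem sdlbfgs_H_max_eigenvalue_bound
    {n : ℕ} (hn : 1 ≤ n)
    (κ δ : ℝ) (hκ : 0 < κ) (hδ : 0 < δ)
    (p : ℕ) (hp : 1 ≤ p)
    (s y ybar : ℕ → Fin n → ℝ) (γ θ ρ : ℕ → ℝ) (γ0 : ℝ)
    (H : ℕ → Matrix (Fin n) (Fin n) ℝ)
    (hs : ∀ i, 1 ≤ i → i ≤ p → s i ≠ 0)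
    (hy : ∀ i, 1 ≤ i → i ≤ p →
      Real.sqrt (y i ⬝ᵥ y i) ≤ κ * Real.sqrt (s i ⬝ᵥ s i))
    (hγ : ∀ i, 1 ≤ i → i ≤ p → γ i ∈ Set.Icc δ (κ + δ))
    (hθ : ∀ i, 1 ≤ i → i ≤ p → θ i =
      if s i ⬝ᵥ y i < 0.25 * γ i * (s i ⬝ᵥ s i)
      then 0.75 * γ i * (s i ⬝ᵥ s i) / (γ i * (s i ⬝ᵥ s i) - s i ⬝ᵥ y i) else 1)
    (hybar : ∀ i, 1 ≤ i → i ≤ p →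
      ybar i = θ i • y i + (1 - θ i) • γ i • s i)
    (hγ0 : γ0 ∈ Set.Icc δ (κ + δ))
    (hH0 : H 0 = γ0⁻¹ • (1 : Matrix (Fin n) (Fin n) ℝ))
    (hρ : ∀ i, 1 ≤ i → i ≤ p → ρ i = (s i ⬝ᵥ ybar i)⁻¹)
    (hHrec : ∀ i, 1 ≤ i → i ≤ p → H i =
      (1 - ρ i • Matrix.vecMulVec (s i) (ybar i)) * H (i - 1) *
        (1 - ρ i • Matrix.vecMulVec (ybar i) (s i))
      + ρ i • Matrix.vecMulVec (s i) (s i)) :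
    l2OpNorm (H p) ≤
      ((((4 * κ + 5 * δ) / δ) ^ (2 * p) - 1) / (((4 * κ + 5 * δ) / δ) ^ 2 - 1)) * (4 / δ)
        + ((4 * κ + 5 * δ) / δ) ^ (2 * p) / δ ∧
    ∀ t : ℝ, t ∈ spectrum ℝ (H p) →
      t ≤ ((((4 * κ + 5 * δ) / δ) ^ (2 * p) - 1) / (((4 * κ + 5 * δ) / δ) ^ 2 - 1)) * (4 / δ)
        + ((4 * κ + 5 * δ) / δ) ^ (2 * p) / δ := by
  have hα : (4 * κ + 5 * δ) / δ = 1 + (κ + δ) / (0.25 * δ) := by field_simp; ring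
  have hcδ : (0.25 * δ)⁻¹ = 4 / δ := by field_simp; norm_num
  have hc : (0.75 : ℝ) = 1 - 0.25 := by norm_num
  have hbound : ∀ i < p, ‖WithLp.toLp 2 (y (i + 1))‖ ≤ (κ + δ) * ‖WithLp.toLp 2 (s (i + 1))‖ :=
    fun i hi => by
      simp only [norm_toLp_two_eq_sqrt_dotProduct]
      exact (hy (i + 1) i.succ_pos hi).trans (by gcongr; exact le_add_of_nonneg_right hδ.le)
  have hmain := sdlbfgs_H_max_eigenvalue_bound_general (H := fun i => toEuclideanCLM (𝕜 := ℝ) (H i))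
    (by norm_num) hδ (add_pos hκ hδ) hα
    (fun i hi => (WithLp.toLp_eq_zero 2).not.2 (hs (i + 1) i.succ_pos hi)) hbound
    (fun i hi => hγ (i + 1) i.succ_pos hi)
    (hH0 ▸ norm_toEuclideanCLM_inv_smul_one_le hδ hγ0.1)
    (fun i hi => hHrec (i + 1) i.succ_pos hi ▸ toEuclideanCLM_dampedBFGS
      (hc ▸ hθ (i + 1) i.succ_pos hi) (hybar (i + 1) i.succ_pos hi) (hρ (i + 1) i.succ_pos hi) _)
  rw [hcδ, ← div_eq_mul_inv] at hmain
  exact ⟨hmain.1, fun t ht => (le_abs_self t).trans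
    (hmain.2 t (by rwa [AlgEquiv.spectrum_eq]))⟩
end
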